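/- Fix reals a < b and let M′[a,b] = {μ ∈ M[a,b] : R_μ(u) > −1 for all real u < a}. Then the relation R_ψ(u) = R_μ(u) for all u ∈ ℂ∖[a,b] defines a bijective correspondence between M̃[a,b] and M′[a,b]: for every ψ ∈ M̃[a,b] there exists exactly one μ ∈ M′[a,b] such that ∫_{[a,b]} μ(dt)/(u−t) = −1 + exp(∫_{[a,b]} ψ(dt)/(u−t)) for all u ∈ ℂ∖[a,b], and for every μ ∈ M′[a,b] there exists exactly one ψ ∈ M̃[a,b] (up to equality of measures) satisfying this identity. -/

import Mathlib

open Filter Topology MeasureTheory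
open scoped BigOperators

/-- `ψ ∈ M̃[a,b]`: a Borel probability measure on `ℝ` supported in `[a,b]`, absolutely
continuous with respect to Lebesgue measure with density bounded by `1` a.e. -/
def MemMTilde (a b : ℝ) (ψ : Measure ℝ) : Prop :=
  IsProbabilityMeasure ψ ∧ ψ (Set.Icc a b) = 1 ∧ ψ ≪ volume ∧
    ∀ᵐ t ∂volume, ψ.rnDeriv volume t ≤ 1

/-- `μ ∈ M[a,b]`: a Borel probability measure on `ℝ` supported in `[a,b]`. -/
def MemM (a b : ℝ) (μ : Measure ℝ) : Prop :=
  IsProbabilityMeasure μ ∧ μ (Set.Icc a b) = 1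

/-- `μ ∈ M′[a,b]`: additionally `R_μ(u) > -1` for all real `u < a`. -/
def MemMPrime (a b : ℝ) (μ : Measure ℝ) : Prop :=
  MemM a b μ ∧ ∀ u : ℝ, u < a → -1 < ∫ t, (u - t)⁻¹ ∂μ

/-- The correspondence identity `∫ μ(dt)/(u-t) = -1 + exp(∫ ψ(dt)/(u-t))` on `ℂ ∖ [a,b]`. -/
def CorrId (a b : ℝ) (ψ μ : Measure ℝ) : Prop :=
  ∀ u : ℂ, u ∉ (fun t : ℝ => (t : ℂ)) '' Set.Icc a b →
    (∫ t, (u - (t : ℂ))⁻¹ ∂μ) = -1 + Complex.exp (∫ t, (u - (t : ℂ))⁻¹ ∂ψ)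

theorem integrable_of_continuousOn_of_ae_mem_Icc {E : Type*} [NormedAddCommGroup E]
    {a b : ℝ} {μ : Measure ℝ} [IsFiniteMeasure μ] (hμ : ∀ᵐ t ∂μ, t ∈ Set.Icc a b)
    {f : ℝ → E} (hf : ContinuousOn f (Set.Icc a b)) : Integrable f μ := by
  have h := hf.integrableOn_Icc (μ := μ)
  rwa [IntegrableOn, Measure.restrict_eq_self_of_ae_mem hμ] at h

theorem continuousOn_inv_sub {a b : ℝ} {u : ℂ}
    (hu : u ∉ (fun t : ℝ => (t : ℂ)) '' Set.Icc a b) :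
    ContinuousOn (fun t : ℝ => (u - (t : ℂ))⁻¹) (Set.Icc a b) := by
  refine ContinuousOn.inv₀ (by fun_prop) fun t ht h => hu ⟨t, ht, ?_⟩
  exact (sub_eq_zero.mp h).symm

theorem tendsto_mul_integral_div_sub {a b : ℝ} {μ : Measure ℝ} [IsFiniteMeasure μ]
    (hμ : ∀ᵐ t ∂μ, t ∈ Set.Icc a b) {g : ℝ → ℝ} (hg : Continuous g) :
    Tendsto (fun u : ℝ => u * ∫ t, g t * (u - t)⁻¹ ∂μ) atTop (𝓝 (∫ t, g t ∂μ)) := by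
  simp_rw [← integral_const_mul]
  have hlim : ∀ t : ℝ, Tendsto (fun u : ℝ => u * (u - t)⁻¹) atTop (𝓝 1) := by
    intro t
    have h1 : Tendsto (fun u : ℝ => 1 + t * (u - t)⁻¹) atTop (𝓝 (1 + t * 0)) :=
      tendsto_const_nhds.add (tendsto_const_nhds.mul
        (tendsto_inv_atTop_zero.comp (tendsto_atTop_add_const_right _ (-t) tendsto_id)))
    simp only [mul_zero, add_zero] at h1
    refine h1.congr' ?_
    filter_upwards [eventually_gt_atTop t] with u hu
    have : u - t ≠ 0 := by linarith
    field_simp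
    ring
  refine tendsto_integral_filter_of_dominated_convergence (fun t => 2 * |g t|) ?_ ?_ ?_ ?_
  · exact Eventually.of_forall fun u => by
      apply Measurable.aestronglyMeasurable
      have := hg.measurable
      fun_prop
  · filter_upwards [eventually_gt_atTop (2 * |a| + 2 * |b|), eventually_gt_atTop 0] with u hu hu0
    filter_upwards [hμ] with t ht
    have h1 : 2 * t ≤ u := by
      have := ht.2
      have := le_abs_self b
      have := abs_nonneg a
      linarith
    have h2 : 0 < u - t := by linarith
    rw [Real.norm_eq_abs, abs_mul, abs_mul, abs_of_pos hu0, abs_of_pos (inv_pos.2 h2)]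
    have : u * (u - t)⁻¹ ≤ 2 := by
      rw [← div_eq_mul_inv, div_le_iff₀ h2]; linarith
    nlinarith [abs_nonneg (g t)]
  · exact integrable_of_continuousOn_of_ae_mem_Icc hμ (by fun_prop)
  · refine Eventually.of_forall fun t => ?_
    have := (hlim t).const_mul (g t)
    rw [mul_one] at this
    refine this.congr fun u => by ring

/-- A finite measure on a compact interval is determined by its Cauchy transform near `+∞`. -/
theorem measure_eq_of_integral_inv_sub_eq {a b : ℝ} {μ ν : Measure ℝ} [IsFiniteMeasure μ]
    [IsFiniteMeasure ν] (hμ : ∀ᵐ t ∂μ, t ∈ Set.Icc a b) (hν : ∀ᵐ t ∂ν, t ∈ Set.Icc a b)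
    (h : ∀ u : ℝ, b < u → ∫ t, (u - t)⁻¹ ∂μ = ∫ t, (u - t)⁻¹ ∂ν) : μ = ν := by
  have hlim : ∀ g : ℝ → ℝ, Continuous g →
      (∀ u : ℝ, b < u → ∫ t, g t * (u - t)⁻¹ ∂μ = ∫ t, g t * (u - t)⁻¹ ∂ν) →
      ∫ t, g t ∂μ = ∫ t, g t ∂ν := by
    intro g hg hh
    refine tendsto_nhds_unique (tendsto_mul_integral_div_sub hμ hg)
      ((tendsto_mul_integral_div_sub hν hg).congr' ?_)
    filter_upwards [eventually_gt_atTop b] with u hu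
    rw [hh u hu]
  have hk : ∀ k : ℕ, ∀ u : ℝ, b < u →
      ∫ t, t ^ k * (u - t)⁻¹ ∂μ = ∫ t, t ^ k * (u - t)⁻¹ ∂ν := by
    intro k
    induction k with
    | zero => simpa using h
    | succ k ih =>
      intro u hu
      have key : ∀ ρ : Measure ℝ, IsFiniteMeasure ρ → (∀ᵐ t ∂ρ, t ∈ Set.Icc a b) →
          ∫ t, t ^ (k + 1) * (u - t)⁻¹ ∂ρ = u * ∫ t, t ^ k * (u - t)⁻¹ ∂ρ - ∫ t, t ^ k ∂ρ := by
        intro ρ _ hρ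
        rw [← integral_const_mul, ← integral_sub]
        · refine integral_congr_ae ?_
          filter_upwards [hρ] with t ht
          have : u - t ≠ 0 := by have := ht.2; intro h0; linarith
          field_simp
          ring
        · refine integrable_of_continuousOn_of_ae_mem_Icc hρ ?_
          refine continuousOn_const.mul (ContinuousOn.mul (by fun_prop)
            (ContinuousOn.inv₀ (by fun_prop) ?_))
          intro t ht h0
          have := ht.2
          linarith
        · exact integrable_of_continuousOn_of_ae_mem_Icc hρ (by fun_prop)
      rw [key μ inferInstance hμ, key ν inferInstance hν, ih u hu,
        hlim _ (continuous_pow k) ih]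
  have hpoly : ∀ p : Polynomial ℝ, ∫ t, p.eval t ∂μ = ∫ t, p.eval t ∂ν := by
    intro p
    simp_rw [Polynomial.eval_eq_sum_range]
    have hi : ∀ ρ : Measure ℝ, IsFiniteMeasure ρ → (∀ᵐ t ∂ρ, t ∈ Set.Icc a b) → ∀ i : ℕ,
        Integrable (fun t => p.coeff i * t ^ i) ρ := fun ρ _ hρ i =>
      integrable_of_continuousOn_of_ae_mem_Icc hρ (by fun_prop)
    rw [integral_finsetSum _ fun i _ => hi μ inferInstance hμ i,
      integral_finsetSum _ fun i _ => hi ν inferInstance hν i]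
    refine Finset.sum_congr rfl fun i _ => ?_
    rw [integral_const_mul, integral_const_mul, hlim _ (continuous_pow i) (hk i)]
  refine ext_of_forall_integral_eq_of_IsFiniteMeasure fun f => ?_
  have hbound : ∀ ε > 0, |∫ t, f t ∂μ - ∫ t, f t ∂ν| ≤ ε * (μ.real Set.univ + ν.real Set.univ) := by
    intro ε hε
    obtain ⟨p, hp⟩ := exists_polynomial_near_of_continuousOn a b f f.continuous.continuousOn ε hε
    have key : ∀ ρ : Measure ℝ, IsFiniteMeasure ρ → (∀ᵐ t ∂ρ, t ∈ Set.Icc a b) →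
        |∫ t, f t ∂ρ - ∫ t, p.eval t ∂ρ| ≤ ε * ρ.real Set.univ := by
      intro ρ _ hρ
      rw [← integral_sub (f.integrable ρ)
        (integrable_of_continuousOn_of_ae_mem_Icc hρ p.continuous.continuousOn),
        ← Real.norm_eq_abs]
      refine norm_integral_le_of_norm_le_const ?_
      filter_upwards [hρ] with t ht
      rw [Real.norm_eq_abs, abs_sub_comm]
      exact (hp t ht).le
    have h1 := key μ inferInstance hμ
    have h2 := key ν inferInstance hν
    rw [hpoly p] at h1
    rw [abs_le] at *
    constructor <;> linarith [h1.1, h1.2, h2.1, h2.2]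
  have h0 : |∫ t, f t ∂μ - ∫ t, f t ∂ν| ≤ 0 := by
    have ht : Tendsto (fun ε : ℝ => ε * (μ.real Set.univ + ν.real Set.univ)) (𝓝[>] 0)
        (𝓝 (0 * (μ.real Set.univ + ν.real Set.univ))) :=
      ((continuous_id.mul continuous_const).tendsto 0).mono_left nhdsWithin_le_nhds
    rw [zero_mul] at ht
    exact ge_of_tendsto ht (eventually_nhdsWithin_of_forall fun ε hε => hbound ε hε)
  exact sub_eq_zero.mp (abs_nonpos_iff.mp h0)

theorem exists_subseq_tendsto_integral {a b : ℝ} (hab : a ≤ b) (μ : ℕ → Measure ℝ)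
    (hp : ∀ n, IsProbabilityMeasure (μ n)) (hs : ∀ n, ∀ᵐ t ∂μ n, t ∈ Set.Icc a b) :
    ∃ ν : Measure ℝ, IsProbabilityMeasure ν ∧ (∀ᵐ t ∂ν, t ∈ Set.Icc a b) ∧
      ∃ φ : ℕ → ℕ, StrictMono φ ∧
        (∀ f : ℝ → ℂ, ContinuousOn f (Set.Icc a b) →
          Tendsto (fun n => ∫ t, f t ∂μ (φ n)) atTop (𝓝 (∫ t, f t ∂ν))) ∧
        ∀ U : Set ℝ, IsOpen U → ν U ≤ liminf (fun n => μ (φ n) U) atTop := by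
  have hK := isCompact_setOfPred_probabilityMeasure_mass_eq_compl_isCompact_le (E := ℝ)
    (u := fun _ => 0) (K := fun _ => Set.Icc a b) tendsto_const_nhds (fun _ => isCompact_Icc)
    (Or.inr monotone_const)
  let P : ℕ → ProbabilityMeasure ℝ := fun n => ⟨μ n, hp n⟩
  obtain ⟨ν, hν, φ, hφ, hlim⟩ := hK.tendsto_subseq (x := P) (fun n _ => by
    have : μ n (Set.Icc a b)ᶜ = 0 := hs n
    simp [P, this])
  have hνs : ∀ᵐ t ∂(ν : Measure ℝ), t ∈ Set.Icc a b := by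
    have := hν 0
    simp only [nonpos_iff_eq_zero] at this
    rw [ProbabilityMeasure.null_iff_toMeasure_null] at this
    exact this
  refine ⟨ν, inferInstance, hνs, φ, hφ, ?_, fun U hU =>
    ProbabilityMeasure.le_liminf_measure_open_of_tendsto hlim hU⟩
  intro f hf
  let F : ℝ → ℂ := Set.IccExtend hab ((Set.Icc a b).domRestrict f)
  have hFc : Continuous F := (continuousOn_iff_continuous_domRestrict.1 hf).Icc_extend'
  obtain ⟨C, hC⟩ := isCompact_Icc.exists_bound_of_continuousOn hf
  let G : BoundedContinuousFunction ℝ ℂ := BoundedContinuousFunction.ofNormedAddCommGroup F hFc C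
    (fun x => hC _ (Set.projIcc a b hab x).2)
  have hG : ∀ ρ : Measure ℝ, (∀ᵐ t ∂ρ, t ∈ Set.Icc a b) → ∫ t, f t ∂ρ = ∫ t, G t ∂ρ := by
    intro ρ hρ
    refine integral_congr_ae ?_
    filter_upwards [hρ] with t ht
    exact (Set.IccExtend_of_mem hab ((Set.Icc a b).domRestrict f) ht).symm
  rw [hG _ hνs]
  simp_rw [fun n => hG _ (hs n)]
  exact (ProbabilityMeasure.tendsto_iff_forall_integral_rclike_tendsto ℂ).1 hlim G

theorem integral_inv_sub_ofReal (μ : Measure ℝ) (u : ℝ) :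
    ∫ t, ((u : ℂ) - (t : ℂ))⁻¹ ∂μ = ((∫ t, (u - t)⁻¹ ∂μ : ℝ) : ℂ) := by
  rw [← integral_complex_ofReal]
  push_cast
  rfl

theorem ofReal_notMem_image_Icc {a b u : ℝ} (hu : u < a ∨ b < u) :
    (u : ℂ) ∉ (fun t : ℝ => (t : ℂ)) '' Set.Icc a b := by
  rintro ⟨t, ht, h⟩
  have : t = u := Complex.ofReal_injective h
  subst this
  rcases hu with hu | hu
  · exact absurd ht.1 (not_le.2 hu)
  · exact absurd ht.2 (not_le.2 hu)

/-- The identity between Cauchy transforms implies equality of total masses. -/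
theorem measureReal_univ_eq_of_exp {a b : ℝ} {μ ψ : Measure ℝ} [IsFiniteMeasure μ]
    [IsFiniteMeasure ψ] (hμ : ∀ᵐ t ∂μ, t ∈ Set.Icc a b) (hψ : ∀ᵐ t ∂ψ, t ∈ Set.Icc a b)
    (h : ∀ u : ℂ, u ∉ (fun t : ℝ => (t : ℂ)) '' Set.Icc a b →
      1 + (∫ t, (u - (t : ℂ))⁻¹ ∂μ) = Complex.exp (∫ t, (u - (t : ℂ))⁻¹ ∂ψ)) :
    μ.real Set.univ = ψ.real Set.univ := by
  have hreal : ∀ u : ℝ, b < u →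
      1 + (∫ t, (u - t)⁻¹ ∂μ) = Real.exp (∫ t, (u - t)⁻¹ ∂ψ) := by
    intro u hu
    have := h u (ofReal_notMem_image_Icc (Or.inr hu))
    rw [integral_inv_sub_ofReal, integral_inv_sub_ofReal] at this
    exact_mod_cast this
  have hlμ := tendsto_mul_integral_div_sub hμ (g := fun _ => 1) continuous_const
  have hlψ := tendsto_mul_integral_div_sub hψ (g := fun _ => 1) continuous_const
  simp only [one_mul, integral_const, smul_eq_mul, mul_one] at hlμ hlψ
  have h0 : Tendsto (fun u : ℝ => ∫ t, (u - t)⁻¹ ∂ψ) atTop (𝓝 0) := by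
    have := hlψ.mul tendsto_inv_atTop_zero
    rw [mul_zero] at this
    refine this.congr' ?_
    filter_upwards [eventually_gt_atTop 0] with u hu
    field_simp
  have hd : Tendsto (fun u : ℝ => dslope Real.exp 0 (∫ t, (u - t)⁻¹ ∂ψ)) atTop (𝓝 1) := by
    have hc : ContinuousAt (dslope Real.exp 0) 0 :=
      continuousAt_dslope_same.2 Real.differentiableAt_exp
    have := hc.tendsto.comp h0
    rwa [dslope_same, Real.deriv_exp, Real.exp_zero] at this
  have hm := hlψ.mul hd
  rw [mul_one] at hm
  refine tendsto_nhds_unique hlμ (hm.congr' ?_)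
  filter_upwards [eventually_gt_atTop b] with u hu
  have := sub_smul_dslope Real.exp 0 (∫ t, (u - t)⁻¹ ∂ψ)
  rw [sub_zero, smul_eq_mul, Real.exp_zero, ← hreal u hu] at this
  rw [mul_assoc, this]
  ring

theorem exp_setIntegral_Ioc_inv_sub {α β : ℝ} (hαβ : α ≤ β) {u : ℂ}
    (hu : u ∉ (fun t : ℝ => (t : ℂ)) '' Set.Icc α β) :
    Complex.exp (∫ t in Set.Ioc α β, (u - (t : ℂ))⁻¹) = (u - α) / (u - β) := by
  have hne : ∀ x ∈ Set.Icc α β, u - (x : ℂ) ≠ 0 := fun x hx h0 =>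
    hu ⟨x, hx, (sub_eq_zero.1 h0).symm⟩
  have hcont := continuousOn_inv_sub hu
  have hder : ∀ x ∈ Set.Icc α β, HasDerivAt
      (fun x : ℝ => Complex.exp (∫ t in α..x, (u - (t : ℂ))⁻¹) * (u - (x : ℂ))) 0 x := by
    intro x hx
    have h1 : HasDerivAt (fun x : ℝ => ∫ t in α..x, (u - (t : ℂ))⁻¹) (u - (x : ℂ))⁻¹ x := by
      refine intervalIntegral.integral_hasDerivAt_right ?_ ?_ ?_
      · refine ContinuousOn.intervalIntegrable ?_
        rw [Set.uIcc_of_le hx.1]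
        exact hcont.mono (Set.Icc_subset_Icc_right hx.2)
      · have hm : Measurable fun t : ℝ => (u - (t : ℂ))⁻¹ := by fun_prop
        exact hm.stronglyMeasurable.stronglyMeasurableAtFilter
      · exact ContinuousAt.inv₀ (by fun_prop) (hne x hx)
    have h2 : HasDerivAt (fun x : ℝ => u - (x : ℂ)) (-1) x := by
      have := (Complex.ofRealCLM.hasDerivAt (x := x)).const_sub u
      simpa using this
    have h3 := h1.cexp.mul h2
    convert! h3 using 1
    have := hne x hx
    field_simp
    ring
  have hconst := constant_of_has_deriv_right_zero
    (fun x hx => (hder x hx).continuousAt.continuousWithinAt)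
    (fun x hx => (hder x ⟨hx.1, hx.2.le⟩).hasDerivWithinAt) β (Set.right_mem_Icc.2 hαβ)
  rw [intervalIntegral.integral_same, Complex.exp_zero, one_mul,
    intervalIntegral.integral_of_le hαβ] at hconst
  rw [eq_div_iff (hne β (Set.right_mem_Icc.2 hαβ)), hconst]

/-- Multiplying `1 + ∑ vₛ / (u - pₛ)` by `(u - α) / (u - β)` moves the weights and adds a pole. -/
theorem one_add_sum_mul_div_sub {ι K : Type*} [Field K] (S : Finset ι) (v p : ι → K) {α β u : K}
    (hβ : ∀ s ∈ S, β - p s ≠ 0) (hu : ∀ s ∈ S, u - p s ≠ 0) (huβ : u - β ≠ 0) :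
    (1 + ∑ s ∈ S, v s * (u - p s)⁻¹) * ((u - α) / (u - β)) =
      1 + ∑ s ∈ S, v s * ((α - p s) / (β - p s)) * (u - p s)⁻¹ +
        (β - α) * (1 + ∑ s ∈ S, v s * (β - p s)⁻¹) * (u - β)⁻¹ := by
  have h : ∀ s ∈ S, v s * (u - p s)⁻¹ * ((u - α) / (u - β)) =
      v s * ((α - p s) / (β - p s)) * (u - p s)⁻¹ +
        (β - α) * (v s * (β - p s)⁻¹) * (u - β)⁻¹ := by
    intro s hs
    have h1 := hβ s hs
    have h2 := hu s hs
    field_simp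
    ring
  rw [add_mul, Finset.sum_mul, Finset.sum_congr rfl h, Finset.sum_add_distrib, ← Finset.sum_mul,
    ← Finset.mul_sum]
  field_simp
  ring

theorem sub_ofReal_ne_zero {a b s : ℝ} {u : ℂ}
    (hu : u ∉ (fun t : ℝ => (t : ℂ)) '' Set.Icc a b) (hs : s ∈ Set.Icc a b) :
    u - (s : ℂ) ≠ 0 := fun h => hu ⟨s, hs, (sub_eq_zero.1 h).symm⟩

theorem notMem_image_Icc_mono {a b a' b' : ℝ} {u : ℂ}
    (hu : u ∉ (fun t : ℝ => (t : ℂ)) '' Set.Icc a b) (ha : a ≤ a') (hb : b' ≤ b) :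
    u ∉ (fun t : ℝ => (t : ℂ)) '' Set.Icc a' b' :=
  fun h => hu (Set.image_mono (Set.Icc_subset_Icc ha hb) h)

theorem exp_setIntegral_union_Ioc {a α β : ℝ} (haα : a ≤ α) (hαβ : α ≤ β) {T : Set ℝ}
    (hT : T ⊆ Set.Icc a α) {u : ℂ} (hu : u ∉ (fun t : ℝ => (t : ℂ)) '' Set.Icc a β) :
    Complex.exp (∫ t in T ∪ Set.Ioc α β, (u - (t : ℂ))⁻¹) =
      Complex.exp (∫ t in T, (u - (t : ℂ))⁻¹) * ((u - α) / (u - β)) := by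
  have hint := (continuousOn_inv_sub hu).integrableOn_Icc (μ := volume)
  rw [setIntegral_union, Complex.exp_add,
    exp_setIntegral_Ioc_inv_sub hαβ (notMem_image_Icc_mono hu haα le_rfl)]
  · exact Set.disjoint_left.2 fun x hx hx' => absurd (hT hx).2 (not_le.2 hx'.1)
  · exact measurableSet_Ioc
  · exact hint.mono_set (hT.trans (Set.Icc_subset_Icc_right hαβ))
  · exact hint.mono_set (Set.Ioc_subset_Icc_self.trans (Set.Icc_subset_Icc_left haα))

theorem exists_interlacing_zero {a x : ℝ} {S : Finset ℝ} {w : ℝ → ℝ} (hS : ∀ s ∈ S, a ≤ s ∧ s < x)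
    (hw : ∀ s ∈ S, 0 < w s) (hwx : 0 < w x) (hax : a ≤ x)
    (hpos : ∀ u < a, 0 < 1 + ∑ s ∈ insert x S, w s * (u - s)⁻¹) :
    ∃ α, a ≤ α ∧ α < x ∧ (∀ s ∈ S, s < α) ∧
      (x - α) * (1 + ∑ s ∈ S, w s * (α - s)⁻¹) = w x := by
  rcases S.eq_empty_or_nonempty with rfl | hne
  · refine ⟨x - w x, le_of_forall_lt fun u hu => ?_, by linarith, by simp, by simp⟩
    have h1 := hpos u hu
    have h2 : u - x < 0 := by linarith
    simp only [insert_empty_eq, Finset.sum_singleton] at h1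
    have h3 := mul_neg_of_pos_of_neg h1 h2
    rw [add_mul, one_mul, mul_assoc, inv_mul_cancel₀ h2.ne, mul_one] at h3
    linarith
  · let m := S.max' hne
    have hm : m ∈ S := S.max'_mem hne
    have hmx := (hS m hm).2
    have hwm := hw m hm
    let y := m + w m / (w m + w x) * (x - m)
    have hfrac : 0 < w m / (w m + w x) := by positivity
    have hmy : m < y := by
      have := mul_pos hfrac (sub_pos.2 hmx)
      simp only [y]; linarith
    have hxy : (x - y) * (y - m)⁻¹ = w x / w m := by
      have : x - m ≠ 0 := by linarith
      simp only [y]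
      field_simp
      ring
    have hyx : y < x := by
      have h1 : 0 < (x - y) * (y - m)⁻¹ := by rw [hxy]; positivity
      have h2 : 0 < (y - m)⁻¹ := inv_pos.2 (by linarith)
      have := (pos_iff_pos_of_mul_pos h1).2 h2
      linarith
    have hlt : ∀ z ∈ Set.Icc y x, ∀ s ∈ S, 0 < z - s := by
      intro z hz s hs
      have h1 : s ≤ m := S.le_max' s hs
      have := hz.1
      linarith
    let Φ : ℝ → ℝ := fun z => (x - z) * (1 + ∑ s ∈ S, w s * (z - s)⁻¹)
    have hΦ : ContinuousOn Φ (Set.Icc y x) := by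
      refine ContinuousOn.mul (by fun_prop) (continuousOn_const.add
        (continuousOn_finsetSum _ fun s hs => continuousOn_const.mul
          (ContinuousOn.inv₀ (by fun_prop) fun z hz => (hlt z hz s hs).ne')))
    have hΦx : Φ x = 0 := by simp [Φ]
    have hΦy : w x ≤ Φ y := by
      have hyI : y ∈ Set.Icc y x := ⟨le_rfl, hyx.le⟩
      have h1 : w m * (y - m)⁻¹ ≤ ∑ s ∈ S, w s * (y - s)⁻¹ :=
        Finset.single_le_sum (f := fun s => w s * (y - s)⁻¹)
          (fun s hs => (mul_pos (hw s hs) (inv_pos.2 (hlt y hyI s hs))).le) hm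
      have h2 : (x - y) * (w m * (y - m)⁻¹) = w x := by
        rw [mul_left_comm, hxy]; field_simp
      have h3 : (x - y) * (w m * (y - m)⁻¹) ≤ Φ y :=
        mul_le_mul_of_nonneg_left (by linarith) (by linarith)
      linarith
    obtain ⟨α, hα, hΦα⟩ := intermediate_value_Icc' hyx.le hΦ
      (show w x ∈ Set.Icc (Φ x) (Φ y) from ⟨by rw [hΦx]; exact hwx.le, hΦy⟩)
    have hαx : α ≠ x := by
      rintro rfl
      linarith
    refine ⟨α, ?_, lt_of_le_of_ne hα.2 hαx, fun s hs => sub_pos.1 (hlt α hα s hs), hΦα⟩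
    linarith [(hS m hm).1, hα.1]

/-- A discrete measure with positive weights comes from Lebesgue measure on a union of
intervals interlacing with the atoms. -/
theorem exists_set_of_atoms {a : ℝ} (S : Finset ℝ) : ∀ (w : ℝ → ℝ) (b : ℝ),
    (∀ s ∈ S, 0 < w s) → (∀ s ∈ S, s ∈ Set.Icc a b) →
    (∀ u < a, 0 < 1 + ∑ s ∈ S, w s * (u - s)⁻¹) →
    ∃ T : Set ℝ, MeasurableSet T ∧ T ⊆ Set.Icc a b ∧
      ∀ u : ℂ, u ∉ (fun t : ℝ => (t : ℂ)) '' Set.Icc a b →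
        1 + ∑ s ∈ S, (w s : ℂ) * (u - (s : ℂ))⁻¹ =
          Complex.exp (∫ t in T, (u - (t : ℂ))⁻¹) := by
  induction S using Finset.induction_on_max with
  | empty => exact fun w b _ _ _ => ⟨∅, MeasurableSet.empty, by simp, by simp⟩
  | insert x S hx ih =>
    intro w b hw hS hpos
    have hxS : x ∉ S := fun h => lt_irrefl _ (hx x h)
    have hxb := hS x (Finset.mem_insert_self x S)
    obtain ⟨α, haα, hαx, hSα, hα⟩ := exists_interlacing_zero
      (fun s hs => ⟨(hS s (Finset.mem_insert_of_mem hs)).1, hx s hs⟩)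
      (fun s hs => hw s (Finset.mem_insert_of_mem hs)) (hw x (Finset.mem_insert_self x S)) hxb.1 hpos
    let v : ℝ → ℝ := fun s => w s * ((x - s) / (α - s))
    have hvw : ∀ s ∈ S, v s * ((α - s) / (x - s)) = w s := by
      intro s hs
      have h1 : α - s ≠ 0 := (sub_pos.2 (hSα s hs)).ne'
      have h2 : x - s ≠ 0 := (sub_pos.2 (hx s hs)).ne'
      simp only [v]
      field_simp
    have hvx : (x - α) * (1 + ∑ s ∈ S, v s * (x - s)⁻¹) = w x := by
      rw [← hα]
      congr 2
      refine Finset.sum_congr rfl fun s hs => ?_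
      have h1 : α - s ≠ 0 := (sub_pos.2 (hSα s hs)).ne'
      have h2 : x - s ≠ 0 := (sub_pos.2 (hx s hs)).ne'
      simp only [v]
      field_simp
    obtain ⟨T, hTm, hTs, hT⟩ := ih v α
      (fun s hs => mul_pos (hw s (Finset.mem_insert_of_mem hs))
        (div_pos (sub_pos.2 (hx s hs)) (sub_pos.2 (hSα s hs))))
      (fun s hs => ⟨(hS s (Finset.mem_insert_of_mem hs)).1, (hSα s hs).le⟩) (by
        intro u hu
        have h1 := one_add_sum_mul_div_sub S v id (α := α) (β := x) (u := u)
          (fun s hs => (sub_pos.2 (hx s hs)).ne')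
          (fun s hs => (sub_neg.2 (hu.trans_le (hS s (Finset.mem_insert_of_mem hs)).1)).ne)
          (by linarith)
        simp only [id] at h1
        have hsum : ∑ s ∈ S, v s * ((α - s) / (x - s)) * (u - s)⁻¹ = ∑ s ∈ S, w s * (u - s)⁻¹ :=
          Finset.sum_congr rfl fun s hs => by rw [hvw s hs]
        rw [hvx, hsum] at h1
        have h2 := hpos u hu
        rw [Finset.sum_insert hxS, add_comm (w x * _), ← add_assoc, ← h1] at h2
        exact (pos_iff_pos_of_mul_pos h2).2
          (div_pos_of_neg_of_neg (by linarith) (by linarith)))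
    refine ⟨T ∪ Set.Ioc α x, hTm.union measurableSet_Ioc, Set.union_subset
      (hTs.trans (Set.Icc_subset_Icc_right (by linarith [hxb.2])))
      (Set.Ioc_subset_Icc_self.trans (Set.Icc_subset_Icc haα hxb.2)), fun u hu => ?_⟩
    rw [exp_setIntegral_union_Ioc haα hαx.le hTs (notMem_image_Icc_mono hu le_rfl hxb.2),
      ← hT u (notMem_image_Icc_mono hu le_rfl (hαx.le.trans hxb.2)),
      one_add_sum_mul_div_sub S (fun s => (v s : ℂ)) (fun s => (s : ℂ))
        (fun s hs => by exact_mod_cast (sub_pos.2 (hx s hs)).ne')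
        (fun s hs => sub_ofReal_ne_zero hu (hS s (Finset.mem_insert_of_mem hs)))
        (sub_ofReal_ne_zero hu hxb),
      Finset.sum_insert hxS, add_comm ((w x : ℂ) * _), ← add_assoc]
    congr 2
    · refine Finset.sum_congr rfl fun s hs => ?_
      rw [← hvw s hs]
      push_cast
      rfl
    · rw [← hvx]
      push_cast
      rfl

theorem ofReal_mul_one_add_sum (S : Finset ℝ) (v : ℝ → ℝ) (α β : ℝ) :
    (((β - α) * (1 + ∑ s ∈ S, v s * (β - s)⁻¹) : ℝ) : ℂ) =
      ((β : ℂ) - α) * (1 + ∑ s ∈ S, (v s : ℂ) * ((β : ℂ) - s)⁻¹) := by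
  push_cast
  rfl

/-- If `ψ ≤ volume`, then `ψ` is approximated at scale `h` by Lebesgue measure on a union of
intervals for which the corresponding atoms have nonnegative weights. -/
theorem exists_atoms_of_le_volume {ψ : Measure ℝ} [IsFiniteMeasure ψ] (hψ : ψ ≤ volume)
    (a : ℝ) {h : ℝ} (hh : 0 < h) (k : ℕ) :
    ∃ T : Set ℝ, MeasurableSet T ∧ T ⊆ Set.Icc a (a + k * h) ∧
      (∃ (S : Finset ℝ) (w : ℝ → ℝ), (∀ s ∈ S, 0 ≤ w s) ∧
        (∀ s ∈ S, s ∈ Set.Icc a (a + k * h)) ∧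
        ∀ u : ℂ, u ∉ (fun t : ℝ => (t : ℂ)) '' Set.Icc a (a + k * h) →
          1 + ∑ s ∈ S, (w s : ℂ) * (u - (s : ℂ))⁻¹ =
            Complex.exp (∫ t in T, (u - (t : ℂ))⁻¹)) ∧
      ∀ (f : ℝ → ℂ) (L : ℝ), 0 ≤ L → (∀ x ∈ Set.Icc a (a + k * h), ∀ y ∈ Set.Icc a (a + k * h),
          ‖f x - f y‖ ≤ L * |x - y|) → ContinuousOn f (Set.Icc a (a + k * h)) →
        ‖(∫ t in Set.Ioc a (a + k * h), f t ∂ψ) - ∫ t in T, f t‖ ≤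
          2 * L * h * ψ.real (Set.Ioc a (a + k * h)) := by
  induction k with
  | zero => exact ⟨∅, MeasurableSet.empty, by simp, ⟨∅, fun _ => 0, by simp⟩, by simp⟩
  | succ k ih =>
    obtain ⟨T, hTm, hTs, ⟨S, v, hv, hS, hST⟩, hf⟩ := ih
    have hc : a + ((k + 1 : ℕ) : ℝ) * h = a + k * h + h := by push_cast; ring
    rw [hc]
    have hac : a ≤ a + k * h := le_add_of_nonneg_right (by positivity)
    generalize a + k * h = c at *
    set m := ψ.real (Set.Ioc c (c + h)) with hm
    have hm0 : 0 ≤ m := measureReal_nonneg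
    have hmh : m ≤ h := by
      refine ENNReal.toReal_le_of_le_ofReal hh.le ((hψ _).trans ?_)
      rw [Real.volume_Ioc]
      simp
    set α := c + h - m with hα
    have hcα : c ≤ α := by linarith
    have hαβ : α ≤ c + h := by linarith
    have haα : a ≤ α := hac.trans hcα
    have hTα : T ⊆ Set.Icc a α := hTs.trans (Set.Icc_subset_Icc_right hcα)
    have hIocsub : Set.Ioc α (c + h) ⊆ Set.Icc a (c + h) :=
      Set.Ioc_subset_Icc_self.trans (Set.Icc_subset_Icc_left haα)
    have hSβ : ∀ s ∈ S, 0 < c + h - s := fun s hs => by linarith [(hS s hs).2]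
    have hβS : c + h ∉ S := fun hs => (hSβ _ hs).ne' (sub_self _)
    let w : ℝ → ℝ := fun s => if s = c + h then
      (c + h - α) * (1 + ∑ s ∈ S, v s * (c + h - s)⁻¹) else v s * ((α - s) / (c + h - s))
    have hwβ : w (c + h) = (c + h - α) * (1 + ∑ s ∈ S, v s * (c + h - s)⁻¹) := if_pos rfl
    have hwS : ∀ s ∈ S, w s = v s * ((α - s) / (c + h - s)) := fun s hs =>
      if_neg fun he : s = c + h => hβS (he ▸ hs)
    refine ⟨T ∪ Set.Ioc α (c + h), hTm.union measurableSet_Ioc, Set.union_subset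
      (hTs.trans (Set.Icc_subset_Icc_right (by linarith))) hIocsub,
      ⟨insert (c + h) S, w, ?_, ?_, ?_⟩, ?_⟩
    · intro s hs
      rcases Finset.mem_insert.1 hs with rfl | hs
      · rw [hwβ]
        refine mul_nonneg (by linarith) (add_nonneg zero_le_one (Finset.sum_nonneg fun s hs => ?_))
        exact mul_nonneg (hv s hs) (inv_nonneg.2 (hSβ s hs).le)
      · rw [hwS s hs]
        exact mul_nonneg (hv s hs) (div_nonneg (by linarith [(hS s hs).2]) (hSβ s hs).le)
    · intro s hs
      rcases Finset.mem_insert.1 hs with rfl | hs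
      · exact ⟨by linarith, le_rfl⟩
      · exact ⟨(hS s hs).1, by linarith [(hS s hs).2]⟩
    · intro u hu
      have hβ : c + h ∈ Set.Icc a (c + h) := ⟨by linarith, le_rfl⟩
      rw [exp_setIntegral_union_Ioc haα hαβ hTα hu,
        ← hST u (notMem_image_Icc_mono hu le_rfl (by linarith)),
        one_add_sum_mul_div_sub S (fun s => (v s : ℂ)) (fun s => (s : ℂ))
          (fun s hs => by exact_mod_cast (hSβ s hs).ne')
          (fun s hs => sub_ofReal_ne_zero hu ⟨(hS s hs).1, by linarith [(hS s hs).2]⟩)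
          (sub_ofReal_ne_zero hu hβ),
        Finset.sum_insert hβS, add_comm ((w (c + h) : ℂ) * _), ← add_assoc, hwβ,
        ofReal_mul_one_add_sum]
      congr 2
      refine Finset.sum_congr rfl fun s hs => ?_
      rw [hwS s hs]
      push_cast
      rfl
    · intro f L hL hfL hfc
      have hsub1 : Set.Icc a c ⊆ Set.Icc a (c + h) := Set.Icc_subset_Icc_right (by linarith)
      have hsub2 : Set.Ioc c (c + h) ⊆ Set.Icc a (c + h) :=
        Set.Ioc_subset_Icc_self.trans (Set.Icc_subset_Icc_left hac)
      have h1 := hf f L hL (fun x hx y hy => hfL x (hsub1 hx) y (hsub1 hy)) (hfc.mono hsub1)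
      have hintψ := hfc.integrableOn_Icc (μ := ψ)
      have hintv := hfc.integrableOn_Icc (μ := volume)
      have hIoc : Set.Ioc a (c + h) = Set.Ioc a c ∪ Set.Ioc c (c + h) :=
        (Set.Ioc_union_Ioc_eq_Ioc hac (by linarith)).symm
      have hdis : Disjoint (Set.Ioc a c) (Set.Ioc c (c + h)) :=
        Set.disjoint_left.2 fun x hx hx' => absurd hx.2 (not_le.2 hx'.1)
      have hm' : ψ.real (Set.Ioc a (c + h)) = ψ.real (Set.Ioc a c) + m := by
        rw [hIoc, measureReal_union hdis measurableSet_Ioc]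
      have hβ : c + h ∈ Set.Icc a (c + h) := ⟨by linarith, le_rfl⟩
      have hclose : ∀ x ∈ Set.Ioc c (c + h), ‖f x - f (c + h)‖ ≤ L * h := by
        intro x hx
        refine (hfL x (hsub2 hx) _ hβ).trans (mul_le_mul_of_nonneg_left ?_ hL)
        rw [abs_sub_comm, abs_of_nonneg (by linarith [hx.2])]
        linarith [hx.1]
      have hvol : volume.real (Set.Ioc α (c + h)) = m := by
        rw [Real.volume_real_Ioc_of_le hαβ]; linarith
      have key : ∀ (ρ : Measure ℝ) (s : Set ℝ), MeasurableSet s → s ⊆ Set.Ioc c (c + h) →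
          ρ.real s = m → ρ s < ⊤ → IntegrableOn f s ρ →
          ‖(∫ t in s, f t ∂ρ) - m * f (c + h)‖ ≤ L * h * m := by
        intro ρ s hs hss hρ hρt hint
        have : (m : ℂ) * f (c + h) = ∫ t in s, f (c + h) ∂ρ := by
          rw [setIntegral_const, hρ, Complex.real_smul]
        rw [this, ← integral_sub hint (integrableOn_const hρt.ne), ← hρ]
        exact norm_setIntegral_le_of_norm_le_const hρt fun x hx => hclose x (hss hx)
      have k1 := key ψ _ measurableSet_Ioc subset_rfl rfl (measure_lt_top _ _)
        (hintψ.mono_set hsub2)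
      have k2 := key volume _ measurableSet_Ioc (Set.Ioc_subset_Ioc_left hcα) hvol
        measure_Ioc_lt_top (hintv.mono_set hIocsub)
      rw [hm', hIoc, setIntegral_union hdis measurableSet_Ioc
        (hintψ.mono_set (Set.Ioc_subset_Icc_self.trans hsub1)) (hintψ.mono_set hsub2),
        setIntegral_union (Set.disjoint_left.2 fun x hx hx' =>
          absurd (hTα hx).2 (not_le.2 hx'.1)) measurableSet_Ioc
          (hintv.mono_set (hTs.trans hsub1)) (hintv.mono_set hIocsub)]
      refine (le_of_eq (congrArg norm ?_)).trans ((norm_add_le _ _).trans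
        (add_le_add h1 ((norm_sub_le _ _).trans (add_le_add k1 k2)))) |>.trans (le_of_eq ?_)
      · ring
      · ring

theorem exists_lipschitz_inv_sub {a b : ℝ} {u : ℂ}
    (hu : u ∉ (fun t : ℝ => (t : ℂ)) '' Set.Icc a b) :
    ∃ L : ℝ, 0 ≤ L ∧ ∀ x ∈ Set.Icc a b, ∀ y ∈ Set.Icc a b,
      ‖(u - (x : ℂ))⁻¹ - (u - (y : ℂ))⁻¹‖ ≤ L * |x - y| := by
  obtain ⟨C, hC⟩ := isCompact_Icc.exists_bound_of_continuousOn (continuousOn_inv_sub hu)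
  refine ⟨C * C, mul_self_nonneg C, fun x hx y hy => ?_⟩
  have h1 := sub_ofReal_ne_zero hu hx
  have h2 := sub_ofReal_ne_zero hu hy
  have h3 : (u - (x : ℂ))⁻¹ - (u - (y : ℂ))⁻¹ =
      (u - (x : ℂ))⁻¹ * (u - (y : ℂ))⁻¹ * ((x - y : ℝ) : ℂ) := by
    push_cast
    field_simp
    ring
  rw [h3, norm_mul, norm_mul, Complex.norm_real, Real.norm_eq_abs]
  refine mul_le_mul_of_nonneg_right ?_ (abs_nonneg _)
  exact mul_le_mul (hC x hx) (hC y hy) (norm_nonneg _) ((norm_nonneg _).trans (hC x hx))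

theorem ae_mem_Icc_of_measure_eq_one {a b : ℝ} {μ : Measure ℝ} [IsProbabilityMeasure μ]
    (h : μ (Set.Icc a b) = 1) : ∀ᵐ t ∂μ, t ∈ Set.Icc a b :=
  (prob_compl_eq_zero_iff measurableSet_Icc).2 h

theorem measure_Icc_eq_one_of_ae_mem {a b : ℝ} {μ : Measure ℝ} [IsProbabilityMeasure μ]
    (h : ∀ᵐ t ∂μ, t ∈ Set.Icc a b) : μ (Set.Icc a b) = 1 :=
  (prob_compl_eq_zero_iff measurableSet_Icc).1 h

theorem isProbabilityMeasure_of_real_univ {μ : Measure ℝ} (h : μ.real Set.univ = 1) :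
    IsProbabilityMeasure μ :=
  ⟨by
    rw [measureReal_def] at h
    exact (ENNReal.toReal_eq_one_iff _).1 h⟩

theorem isFiniteMeasure_restrict_of_subset_Icc {a b : ℝ} {T : Set ℝ} (hT : T ⊆ Set.Icc a b) :
    IsFiniteMeasure (volume.restrict T) :=
  ⟨by
    rw [Measure.restrict_apply_univ]
    exact (measure_mono hT).trans_lt measure_Icc_lt_top⟩

theorem integral_finset_sum_dirac (S : Finset ℝ) {w : ℝ → ℝ} (hw : ∀ s ∈ S, 0 ≤ w s)
    (f : ℝ → ℂ) :
    ∫ t, f t ∂(∑ s ∈ S, ENNReal.ofReal (w s) • Measure.dirac s) =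
      ∑ s ∈ S, (w s : ℂ) * f s := by
  rw [integral_finsetSum_measure]
  · refine Finset.sum_congr rfl fun s hs => ?_
    rw [integral_smul_measure, integral_dirac, ENNReal.toReal_ofReal (hw s hs),
      Complex.real_smul]
  · exact fun s _ => (integrable_dirac (by simp)).smul_measure ENNReal.ofReal_ne_top

/-- Discretization of the forward direction: measures of atoms whose Cauchy transforms
approximate `-1 + exp` of that of `ψ`. -/
theorem exists_approx_of_le_volume {a b : ℝ} (hab : a < b) {ψ : Measure ℝ}
    [IsProbabilityMeasure ψ] (hψ : ψ ≤ volume) (hs : ∀ᵐ t ∂ψ, t ∈ Set.Icc a b) (n : ℕ) :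
    ∃ (μ : Measure ℝ) (T : Set ℝ), IsProbabilityMeasure μ ∧ (∀ᵐ t ∂μ, t ∈ Set.Icc a b) ∧
      (∀ u : ℂ, u ∉ (fun t : ℝ => (t : ℂ)) '' Set.Icc a b →
        1 + ∫ t, (u - (t : ℂ))⁻¹ ∂μ = Complex.exp (∫ t in T, (u - (t : ℂ))⁻¹)) ∧
      ∀ (f : ℝ → ℂ) (L : ℝ), 0 ≤ L → (∀ x ∈ Set.Icc a b, ∀ y ∈ Set.Icc a b,
          ‖f x - f y‖ ≤ L * |x - y|) → ContinuousOn f (Set.Icc a b) →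
        ‖(∫ t, f t ∂ψ) - ∫ t in T, f t‖ ≤ 2 * L * (b - a) * (1 / ((n : ℝ) + 1)) := by
  have hh : 0 < (b - a) * (1 / ((n : ℝ) + 1)) := mul_pos (sub_pos.2 hab) (by positivity)
  have hb : a + ((n + 1 : ℕ) : ℝ) * ((b - a) * (1 / ((n : ℝ) + 1))) = b := by
    push_cast
    field_simp
    ring
  obtain ⟨T, hTm, hTs, ⟨S, w, hw, hS, hST⟩, hf⟩ := exists_atoms_of_le_volume hψ a hh (n + 1)
  rw [hb] at hTs hS hST hf
  have hψa : ψ {a} = 0 := le_antisymm ((hψ _).trans (by simp)) zero_le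
  have hs' : ∀ᵐ t ∂ψ, t ∈ Set.Ioc a b := by
    have h1 : ∀ᵐ t ∂ψ, t ≠ a := by
      rw [ae_iff]
      simpa using hψa
    filter_upwards [hs, h1] with t ht ht'
    exact ⟨lt_of_le_of_ne ht.1 (Ne.symm ht'), ht.2⟩
  have hψu : ψ.real (Set.Ioc a b) = 1 := by
    rw [measureReal_def, (prob_compl_eq_zero_iff measurableSet_Ioc).1 hs', ENNReal.toReal_one]
  rw [Measure.restrict_eq_self_of_ae_mem hs', hψu] at hf
  have := isFiniteMeasure_restrict_of_subset_Icc hTs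
  have hmT : (volume.restrict T).real Set.univ = 1 := by
    have := hf (fun _ => 1) 0 le_rfl (by simp) continuousOn_const
    simp only [integral_const, mul_zero, zero_mul, norm_le_zero_iff, probReal_univ, one_smul,
      sub_eq_zero, Complex.real_smul, mul_one] at this
    exact_mod_cast this.symm
  let μ : Measure ℝ := ∑ s ∈ S, ENNReal.ofReal (w s) • Measure.dirac s
  have hμs : ∀ᵐ t ∂μ, t ∈ Set.Icc a b := by
    rw [ae_iff]
    change μ (Set.Icc a b)ᶜ = 0
    rw [Measure.finsetSum_apply]
    refine Finset.sum_eq_zero fun s hs => ?_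
    rw [Measure.smul_apply, Measure.dirac_apply' _ measurableSet_Icc.compl,
      Set.indicator_of_notMem (by simpa using hS s hs), smul_zero]
  have : IsFiniteMeasure μ := ⟨by
    simp only [μ, Measure.finsetSum_apply, Measure.smul_apply, measure_univ, smul_eq_mul, mul_one]
    exact ENNReal.sum_lt_top.2 fun s _ => ENNReal.ofReal_lt_top⟩
  have hid : ∀ u : ℂ, u ∉ (fun t : ℝ => (t : ℂ)) '' Set.Icc a b →
      1 + ∫ t, (u - (t : ℂ))⁻¹ ∂μ = Complex.exp (∫ t in T, (u - (t : ℂ))⁻¹) := by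
    intro u hu
    rw [integral_finset_sum_dirac S hw, hST u hu]
  have hμu := measureReal_univ_eq_of_exp hμs
    ((ae_restrict_mem hTm).mono fun t ht => hTs ht) hid
  rw [hmT] at hμu
  refine ⟨μ, T, isProbabilityMeasure_of_real_univ hμu, hμs, hid, fun f L h1 h2 h3 => ?_⟩
  refine (hf f L h1 h2 h3).trans (le_of_eq ?_)
  ring

/-- Rounding up to the grid `ℤ / (n + 1)`, capped at `b`. -/
noncomputable def gridCeil (b : ℝ) (n : ℕ) (t : ℝ) : ℝ :=
  min b (⌈t * ((n : ℝ) + 1)⌉ / ((n : ℝ) + 1))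

theorem measurable_gridCeil (b : ℝ) (n : ℕ) : Measurable (gridCeil b n) := by
  unfold gridCeil
  have : Measurable fun t : ℝ => ((⌈t * ((n : ℝ) + 1)⌉ : ℤ) : ℝ) :=
    (measurable_from_top (f := fun z : ℤ => (z : ℝ))).comp
      (Int.measurable_ceil.comp (measurable_id.mul_const _))
  exact measurable_const.min (this.div_const _)

theorem le_gridCeil {b t : ℝ} (n : ℕ) (ht : t ≤ b) : t ≤ gridCeil b n t := by
  refine le_min ht ?_
  rw [le_div_iff₀ (by positivity)]
  exact Int.le_ceil _

theorem gridCeil_sub_le (b t : ℝ) (n : ℕ) : gridCeil b n t - t ≤ 1 / ((n : ℝ) + 1) := by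
  have h1 : gridCeil b n t ≤ _ := min_le_right _ _
  have h2 : (⌈t * ((n : ℝ) + 1)⌉ : ℝ) / ((n : ℝ) + 1) ≤ t + 1 / ((n : ℝ) + 1) := by
    rw [div_le_iff₀ (by positivity), add_mul, one_div, inv_mul_cancel₀ (by positivity)]
    exact (Int.ceil_lt_add_one _).le
  linarith

theorem gridCeil_mem_Icc {a b t : ℝ} (n : ℕ) (ht : t ∈ Set.Icc a b) :
    gridCeil b n t ∈ Set.Icc a b :=
  ⟨ht.1.trans (le_gridCeil n ht.2), min_le_left _ _⟩

theorem exists_finset_gridCeil_mem (a b : ℝ) (n : ℕ) :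
    ∃ S : Finset ℝ, ∀ t ∈ Set.Icc a b, gridCeil b n t ∈ S := by
  refine ⟨(Finset.Icc ⌈a * ((n : ℝ) + 1)⌉ ⌈b * ((n : ℝ) + 1)⌉).image
    fun z : ℤ => min b ((z : ℝ) / ((n : ℝ) + 1)), fun t ht => ?_⟩
  have hn : (0 : ℝ) ≤ n + 1 := by positivity
  exact Finset.mem_image.2 ⟨⌈t * ((n : ℝ) + 1)⌉, Finset.mem_Icc.2
    ⟨Int.ceil_mono (mul_le_mul_of_nonneg_right ht.1 hn),
      Int.ceil_mono (mul_le_mul_of_nonneg_right ht.2 hn)⟩, rfl⟩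

/-- Discretization of the backward direction. -/
theorem exists_approx_set {a b : ℝ} {μ : Measure ℝ} [IsProbabilityMeasure μ]
    (hs : ∀ᵐ t ∂μ, t ∈ Set.Icc a b) (hpos : ∀ u : ℝ, u < a → -1 < ∫ t, (u - t)⁻¹ ∂μ) (n : ℕ) :
    ∃ T : Set ℝ, MeasurableSet T ∧ T ⊆ Set.Icc a b ∧
      IsProbabilityMeasure (volume.restrict T) ∧
      ∀ u : ℂ, u ∉ (fun t : ℝ => (t : ℂ)) '' Set.Icc a b →
        1 + ∫ t, (u - (gridCeil b n t : ℂ))⁻¹ ∂μ = Complex.exp (∫ t in T, (u - (t : ℂ))⁻¹) := by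
  have hr := measurable_gridCeil b n
  let ρ := μ.map (gridCeil b n)
  have : IsProbabilityMeasure ρ := Measure.isProbabilityMeasure_map hr.aemeasurable
  have hρs : ∀ᵐ t ∂ρ, t ∈ Set.Icc a b :=
    (ae_map_iff hr.aemeasurable measurableSet_Icc).2
      (hs.mono fun t ht => gridCeil_mem_Icc n ht)
  obtain ⟨S₀, hS₀⟩ := exists_finset_gridCeil_mem a b n
  have hρS : ∀ᵐ t ∂ρ, t ∈ (S₀ : Set ℝ) :=
    (ae_map_iff hr.aemeasurable S₀.measurableSet).2 (hs.mono fun t ht => hS₀ t ht)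
  let w : ℝ → ℝ := fun s => ρ.real {s}
  let S := S₀.filter fun s => 0 < w s
  have hsum : ∀ {E : Type} [NormedAddCommGroup E] [NormedSpace ℝ E] [CompleteSpace E] (f : ℝ → E),
      ContinuousOn f (Set.Icc a b) → ∫ t, f t ∂ρ = ∑ s ∈ S, w s • f s := by
    intro E _ _ _ f hf
    have h1 := integrable_of_continuousOn_of_ae_mem_Icc hρs hf
    have h2 := setIntegral_finset S₀ (h1.integrableOn (s := (S₀ : Set ℝ)))
    rw [Measure.restrict_eq_self_of_ae_mem hρS] at h2
    rw [h2]
    refine (Finset.sum_filter_of_ne fun s _ hne => ?_).symm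
    exact lt_of_le_of_ne measureReal_nonneg fun h0 => hne (by
      rw [show ρ.real {s} = 0 from h0.symm, zero_smul])
  have hw : ∀ s ∈ S, 0 < w s := fun s hs => (Finset.mem_filter.1 hs).2
  have hSI : ∀ s ∈ S, s ∈ Set.Icc a b := by
    intro s hs
    by_contra hns
    have h0 : ρ {s} = 0 := measure_mono_null (by simpa using hns) hρs
    have := hw s hs
    simp [w, measureReal_def, h0] at this
  have hcont : ∀ u < a, ContinuousOn (fun t : ℝ => (u - t)⁻¹) (Set.Icc a b) := fun u hu =>
    ContinuousOn.inv₀ (by fun_prop) fun t ht h0 => by linarith [ht.1]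
  have hpos' : ∀ u < a, 0 < 1 + ∑ s ∈ S, w s * (u - s)⁻¹ := by
    intro u hu
    have h1 := hsum _ (hcont u hu)
    simp only [smul_eq_mul] at h1
    rw [← h1, integral_map hr.aemeasurable (by
      apply Measurable.aestronglyMeasurable; fun_prop)]
    have h2 : ∫ t, (u - t)⁻¹ ∂μ ≤ ∫ t, (u - gridCeil b n t)⁻¹ ∂μ := by
      refine integral_mono_ae (integrable_of_continuousOn_of_ae_mem_Icc hs (hcont u hu))
        ((integrable_of_continuousOn_of_ae_mem_Icc hρs (hcont u hu)).comp_measurable hr) ?_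
      filter_upwards [hs] with t ht
      have h3 := le_gridCeil n ht.2
      exact (inv_le_inv_of_neg (by linarith [ht.1]) (by linarith [ht.1])).2 (by linarith)
    linarith [hpos u hu]
  obtain ⟨T, hTm, hTs, hT⟩ := exists_set_of_atoms S w b hw hSI hpos'
  have := isFiniteMeasure_restrict_of_subset_Icc hTs
  have hid : ∀ u : ℂ, u ∉ (fun t : ℝ => (t : ℂ)) '' Set.Icc a b →
      1 + ∫ t, (u - (t : ℂ))⁻¹ ∂ρ = Complex.exp (∫ t in T, (u - (t : ℂ))⁻¹) := by
    intro u hu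
    rw [hsum _ (continuousOn_inv_sub hu), ← hT u hu]
    simp only [Complex.real_smul]
  have hmass := measureReal_univ_eq_of_exp hρs
    ((ae_restrict_mem hTm).mono fun t ht => hTs ht) hid
  rw [probReal_univ] at hmass
  refine ⟨T, hTm, hTs, isProbabilityMeasure_of_real_univ hmass.symm, fun u hu => ?_⟩
  rw [← hid u hu, integral_map hr.aemeasurable (by
      apply Measurable.aestronglyMeasurable; fun_prop)]

theorem MemMTilde.le_volume {a b : ℝ} {ψ : Measure ℝ} (h : MemMTilde a b ψ) : ψ ≤ volume := by
  obtain ⟨_, _, hac, hle⟩ := h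
  exact (Measure.rnDeriv_le_one_iff_le hac).1 hle

theorem CorrId.unique_left {a b : ℝ} {ψ ψ' μ : Measure ℝ} (hψ : MemMTilde a b ψ)
    (hψ' : MemMTilde a b ψ') (h : CorrId a b ψ μ) (h' : CorrId a b ψ' μ) : ψ' = ψ := by
  have := hψ.1
  have := hψ'.1
  refine measure_eq_of_integral_inv_sub_eq (ae_mem_Icc_of_measure_eq_one hψ'.2.1)
    (ae_mem_Icc_of_measure_eq_one hψ.2.1) fun u hu => ?_
  have h1 := h u (ofReal_notMem_image_Icc (Or.inr hu))
  rw [h' u (ofReal_notMem_image_Icc (Or.inr hu)), integral_inv_sub_ofReal,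
    integral_inv_sub_ofReal] at h1
  exact Real.exp_injective (by exact_mod_cast add_left_cancel h1)

theorem CorrId.unique_right {a b : ℝ} {ψ μ μ' : Measure ℝ} (hμ : MemM a b μ)
    (hμ' : MemM a b μ') (h : CorrId a b ψ μ) (h' : CorrId a b ψ μ') : μ' = μ := by
  have := hμ.1
  have := hμ'.1
  refine measure_eq_of_integral_inv_sub_eq (ae_mem_Icc_of_measure_eq_one hμ'.2)
    (ae_mem_Icc_of_measure_eq_one hμ.2) fun u hu => ?_
  have h1 := h u (ofReal_notMem_image_Icc (Or.inr hu))
  rw [← h' u (ofReal_notMem_image_Icc (Or.inr hu)), integral_inv_sub_ofReal,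
    integral_inv_sub_ofReal] at h1
  exact_mod_cast h1.symm

theorem CorrId.memMPrime {a b : ℝ} {ψ μ : Measure ℝ} (hμ : MemM a b μ) (h : CorrId a b ψ μ) :
    MemMPrime a b μ := by
  refine ⟨hμ, fun u hu => ?_⟩
  have h1 := h u (ofReal_notMem_image_Icc (Or.inl hu))
  rw [integral_inv_sub_ofReal, integral_inv_sub_ofReal] at h1
  have h2 : ∫ t, (u - t)⁻¹ ∂μ = -1 + Real.exp (∫ t, (u - t)⁻¹ ∂ψ) := by exact_mod_cast h1
  linarith [Real.exp_pos (∫ t, (u - t)⁻¹ ∂ψ)]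

theorem MemMTilde.exists_corrId {a b : ℝ} (hab : a < b) {ψ : Measure ℝ} (hψ : MemMTilde a b ψ) :
    ∃ μ : Measure ℝ, MemM a b μ ∧ CorrId a b ψ μ := by
  have := hψ.1
  choose μ T hμp hμs hid hf using exists_approx_of_le_volume hab hψ.le_volume
    (ae_mem_Icc_of_measure_eq_one hψ.2.1)
  obtain ⟨ν, _, hνs, φ, hφ, hlim, -⟩ := exists_subseq_tendsto_integral hab.le μ hμp hμs
  refine ⟨ν, ⟨inferInstance, measure_Icc_eq_one_of_ae_mem hνs⟩, fun u hu => ?_⟩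
  obtain ⟨L, hL, hLip⟩ := exists_lipschitz_inv_sub hu
  have hT : Tendsto (fun n => ∫ t in T n, (u - (t : ℂ))⁻¹) atTop
      (𝓝 (∫ t, (u - (t : ℂ))⁻¹ ∂ψ)) := by
    refine tendsto_iff_norm_sub_tendsto_zero.2 (squeeze_zero (fun _ => norm_nonneg _)
      (fun n => ?_) ((mul_zero (2 * L * (b - a))) ▸
        (tendsto_one_div_add_atTop_nhds_zero_nat (𝕜 := ℝ)).const_mul (2 * L * (b - a))))
    rw [norm_sub_rev]
    exact hf n _ L hL hLip (continuousOn_inv_sub hu)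
  have h1 := (hT.comp hφ.tendsto_atTop).cexp
  have h2 := (hlim _ (continuousOn_inv_sub hu)).const_add 1
  rw [← tendsto_nhds_unique h2 (h1.congr fun n => (hid (φ n) u hu).symm)]
  ring

theorem MemMPrime.exists_corrId {a b : ℝ} (hab : a < b) {μ : Measure ℝ} (hμ : MemMPrime a b μ) :
    ∃ ψ : Measure ℝ, MemMTilde a b ψ ∧ CorrId a b ψ μ := by
  have := hμ.1.1
  have hs := ae_mem_Icc_of_measure_eq_one hμ.1.2
  choose T hTm hTs hTp hid using exists_approx_set hs hμ.2
  obtain ⟨ψ, _, hψs, φ, hφ, hlim, hopen⟩ := exists_subseq_tendsto_integral hab.le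
    (fun n => volume.restrict (T n)) hTp
    (fun n => (ae_restrict_mem (hTm n)).mono fun t ht => hTs n ht)
  have hle : ψ ≤ volume := by
    refine Measure.le_intro fun A _ _ => ?_
    rw [A.measure_eq_iInf_isOpen volume]
    refine le_iInf₂ fun U hAU => le_iInf fun hU => (measure_mono hAU).trans
      ((hopen U hU).trans ?_)
    refine (liminf_le_liminf (Eventually.of_forall fun n => Measure.restrict_apply_le _ _)).trans
      (liminf_const _).le
  refine ⟨ψ, ⟨inferInstance, measure_Icc_eq_one_of_ae_mem hψs,
    Measure.absolutelyContinuous_of_le hle,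
    Measure.rnDeriv_le_one_of_le hle⟩, fun u hu => ?_⟩
  obtain ⟨L, hL, hLip⟩ := exists_lipschitz_inv_sub hu
  have hfc := continuousOn_inv_sub hu
  have hT : Tendsto (fun n => ∫ t, (u - (gridCeil b n t : ℂ))⁻¹ ∂μ) atTop
      (𝓝 (∫ t, (u - (t : ℂ))⁻¹ ∂μ)) := by
    obtain ⟨C, hC⟩ := isCompact_Icc.exists_bound_of_continuousOn hfc
    refine tendsto_integral_of_dominated_convergence (fun _ => C) (fun n => ?_)
      (integrable_const C) (fun n => ?_) ?_
    · have := measurable_gridCeil b n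
      apply Measurable.aestronglyMeasurable
      fun_prop
    · filter_upwards [hs] with t ht using hC _ (gridCeil_mem_Icc n ht)
    · filter_upwards [hs] with t ht
      refine tendsto_iff_norm_sub_tendsto_zero.2 (squeeze_zero (fun _ => norm_nonneg _)
        (fun n => ?_) ((mul_zero L) ▸
          (tendsto_one_div_add_atTop_nhds_zero_nat (𝕜 := ℝ)).const_mul L))
      refine (hLip _ (gridCeil_mem_Icc n ht) t ht).trans (mul_le_mul_of_nonneg_left ?_ hL)
      rw [abs_of_nonneg (sub_nonneg.2 (le_gridCeil n ht.2))]
      exact gridCeil_sub_le b t n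
  have h1 := (hlim _ hfc).cexp
  have h2 := (hT.comp hφ.tendsto_atTop).const_add 1
  rw [← tendsto_nhds_unique h2 (h1.congr fun n => (hid (φ n) u hu).symm)]
  ring

/-- Theorem: bijection between `M̃[a,b]` and `M′[a,b]`.
The relation `R_ψ(u) = R_μ(u)` for all `u ∈ ℂ ∖ [a,b]` defines a bijective correspondence between
`M̃[a,b]` and `M′[a,b] = {μ ∈ M[a,b] : R_μ(u) > -1 for u < a}`. -/
theorem stmt19 (a b : ℝ) (hab : a < b) :
    (∀ ψ : Measure ℝ, MemMTilde a b ψ →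
      ∃ μ : Measure ℝ, MemMPrime a b μ ∧ CorrId a b ψ μ ∧
        ∀ μ' : Measure ℝ, MemMPrime a b μ' → CorrId a b ψ μ' → μ' = μ) ∧
    (∀ μ : Measure ℝ, MemMPrime a b μ →
      ∃ ψ : Measure ℝ, MemMTilde a b ψ ∧ CorrId a b ψ μ ∧
        ∀ ψ' : Measure ℝ, MemMTilde a b ψ' → CorrId a b ψ' μ → ψ' = ψ) := by
  refine ⟨fun ψ hψ => ?_, fun μ hμ => ?_⟩
  · obtain ⟨μ, hμ, h⟩ := hψ.exists_corrId hab
    exact ⟨μ, h.memMPrime hμ, h, fun μ' hμ' h' => h.unique_right hμ hμ'.1 h'⟩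
  · obtain ⟨ψ, hψ, h⟩ := hμ.exists_corrId hab
    exact ⟨ψ, hψ, h, fun ψ' hψ' h' => h.unique_left hψ hψ' h'⟩
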